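/- Let G be a connected weighted graph on a finite vertex set V with positive edge susceptances and weighted Laplacian L, and fix a reference vertex r, so shift factors Ψ_{ℓ,v} are well defined. Let C ⊆ V be a vertex cut set, let B be the union of the vertex sets of some (but not all) connected components of G − C, and let A = V ∖ (B ∪ C), so that no edge of G joins A and B. Let {n_1, …, n_M} be the vertices of C adjacent in G to at least one vertex of B. Let line i be an edge both of whose endpoints i1, i2 lie in A ∪ C. Then for every bus p ∈ B, min{Ψ_{i,n_1}, …, Ψ_{i,n_M}} ≤ Ψ_{i,p} ≤ max{Ψ_{i,n_1}, …, Ψ_{i,n_M}}. Consequently, a pair of buses of B ∪ {n_1,…,n_M} maximizing |Ψ_{i,·} − Ψ_{i,·}| can be chosen within {n_1, …, n_M}. -/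

import Mathlib

open Matrix

/-- The weighted Laplacian of a graph on the finite vertex set `V` whose edges are
the pairs `{u,v}` with `w u v > 0`, carrying susceptance `w u v`. -/
def weightedLaplacian {V : Type*} [Fintype V] [DecidableEq V] (w : V → V → ℝ) :
    Matrix V V ℝ :=
  Matrix.of fun u v => if u = v then ∑ x, w u x else -(w u v)

/-!
By reciprocity of the symmetric Laplacian, the shift factors of a line, viewed as a function of the
injection bus, are up to an additive constant a multiple of the potential created by a unit current
sent through the end points of that line. They are therefore harmonic at every other bus, in
particular on `B`, and the maximum principle confines them on `B` to the range of their values on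
the neighbours of `B`, all of which lie in any cut set separating `B` from the rest of the grid.
-/

section MaximumPrinciple

variable {V R : Type*} [LinearOrder R]

/-- The outer vertex boundary of `B`: the vertices off `B` that receive an edge of positive weight
from `B`. -/
def outerBoundary [Zero R] [Fintype V] [DecidableEq V] (w : V → V → R) (B : Finset V) : Finset V :=
  {n | n ∉ B ∧ ∃ b ∈ B, 0 < w b n}

theorem mem_outerBoundary [Zero R] [Fintype V] [DecidableEq V] {w : V → V → R} {B : Finset V}
    {n : V} :
    n ∈ outerBoundary w B ↔ n ∉ B ∧ ∃ b ∈ B, 0 < w b n := by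
  simp [outerBoundary]

variable [Ring R]

/-- Subharmonicity of `f` at the vertices of `B` for the edge weights `w`: the potential drops out
of each `b ∈ B`, weighted by `w b`, have nonpositive sum. The row sums `∑ x, w b x` are not
normalized to `1`. -/
def IsSubharmonicOn [Fintype V] (w : V → V → R) (f : V → R) (B : Finset V) : Prop :=
  ∀ b ∈ B, ∑ x, w b x * (f b - f x) ≤ 0

theorem exists_rel_mem_notMem_of_reflTransGen {α : Type*} {r : α → α → Prop} {S : Set α} {a b : α}
    (h : Relation.ReflTransGen r a b) (ha : a ∈ S) (hb : b ∉ S) :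
    ∃ x ∈ S, ∃ y ∉ S, r x y := by
  induction h with
  | refl => exact absurd ha hb
  | @tail c d _ hcd ih =>
    by_cases hc : c ∈ S
    · exact ⟨c, hc, d, hb, hcd⟩
    · exact ih hc

theorem reflTransGen_of_connected_fromRel {α : Type*} {r : α → α → Prop}
    (hr : ∀ a b, r a b → r b a) (h : (SimpleGraph.fromRel r).Connected) (a b : α) :
    Relation.ReflTransGen r a b := by
  have hreach := (SimpleGraph.reachable_iff_reflTransGen a b).1 (h.preconnected a b)
  refine Relation.ReflTransGen.mono (fun x y hxy => ?_) a b hreach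
  exact ((SimpleGraph.fromRel_adj r x y).1 hxy).2.elim id (hr y x)

variable [IsStrictOrderedRing R]

theorem exists_pos_and_lt_of_sum_mul_sub_nonpos {ι : Type*} {s : Finset ι} {c f : ι → R} {t : R}
    (hc : ∀ i ∈ s, 0 ≤ c i) (hsum : ∑ i ∈ s, c i * (t - f i) ≤ 0)
    {i : ι} (hi : i ∈ s) (hci : 0 < c i) (hfi : f i < t) :
    ∃ j ∈ s, 0 < c j ∧ t < f j := by
  by_contra! hle
  have hterm : ∀ j ∈ s, 0 ≤ c j * (t - f j) := by
    intro j hj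
    rcases (hc j hj).eq_or_lt with h0 | hpos
    · simp [← h0]
    · exact mul_nonneg hpos.le (sub_nonneg.2 (hle j hj hpos))
  exact hsum.not_gt (Finset.sum_pos' hterm ⟨i, hi, mul_pos hci (sub_pos.2 hfi)⟩)

theorem IsSubharmonicOn.exists_le_outerBoundary [Fintype V] [DecidableEq V]
    {w : V → V → R} {f : V → R} {B : Finset V}
    (hf : IsSubharmonicOn w f B) (hw : ∀ b ∈ B, ∀ x, 0 ≤ w b x)
    (hexit : ∀ b ∈ B, ∃ a ∉ B, Relation.ReflTransGen (fun u v => 0 < w u v) b a)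
    {p : V} (hp : p ∈ B) : ∃ n ∈ outerBoundary w B, f p ≤ f n := by
  obtain ⟨m, hmB, hmax⟩ := B.exists_max_image f ⟨p, hp⟩
  suffices h : ∃ n ∈ outerBoundary w B, f m ≤ f n from
    h.imp fun n hn => ⟨hn.1, (hmax p hp).trans hn.2⟩
  -- Some edge leaves the maximum set of `f` on `B`. If `f` decreases along it, subharmonicity
  -- forces another edge with the same tail along which `f` increases, and that edge must leave `B`.
  obtain ⟨a, haB, hma⟩ := hexit m hmB
  obtain ⟨b, ⟨hbB, hbm⟩, x, hx, hbx⟩ :=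
    exists_rel_mem_notMem_of_reflTransGen (S := {b | b ∈ B ∧ f b = f m}) hma
      ⟨hmB, rfl⟩ fun h => haB h.1
  rcases le_or_gt (f m) (f x) with hmx | hxm
  · have hxB : x ∉ B := fun h => hx ⟨h, (hmax x h).antisymm hmx⟩
    exact ⟨x, mem_outerBoundary.2 ⟨hxB, b, hbB, hbx⟩, hmx⟩
  · obtain ⟨y, -, hby, hlt⟩ := exists_pos_and_lt_of_sum_mul_sub_nonpos (fun x _ => hw b hbB x)
      (hf b hbB) (Finset.mem_univ x) hbx (hbm ▸ hxm)
    rw [hbm] at hlt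
    have hyB : y ∉ B := fun h => (hmax y h).not_gt hlt
    exact ⟨y, mem_outerBoundary.2 ⟨hyB, b, hbB, hby⟩, hlt.le⟩

end MaximumPrinciple

theorem exists_abs_sub_le_abs_sub_of_between {α R : Type*} [DecidableEq α]
    [AddCommGroup R] [LinearOrder R] [IsOrderedAddMonoid R]
    {f : α → R} {B N : Finset α} (hN : N.Nonempty)
    (h : ∀ p ∈ B, (∃ n ∈ N, f n ≤ f p) ∧ ∃ n ∈ N, f p ≤ f n) :
    ∃ u ∈ N, ∃ v ∈ N, ∀ x ∈ B ∪ N, ∀ y ∈ B ∪ N, |f x - f y| ≤ |f u - f v| := by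
  obtain ⟨u, hu, hmax⟩ := N.exists_max_image f hN
  obtain ⟨v, hv, hmin⟩ := N.exists_min_image f hN
  have hrange : ∀ x ∈ B ∪ N, f x ∈ Set.Icc (f v) (f u) := by
    intro x hx
    rcases Finset.mem_union.1 hx with hxB | hxN
    · obtain ⟨⟨k, hk, hkx⟩, l, hl, hxl⟩ := h x hxB
      exact ⟨(hmin k hk).trans hkx, hxl.trans (hmax l hl)⟩
    · exact ⟨hmin x hxN, hmax x hxN⟩
  refine ⟨u, hu, v, hv, fun x hx y hy => Set.abs_sub_le_of_uIcc_subset_uIcc ?_⟩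
  exact Set.uIcc_subset_uIcc (Set.Icc_subset_uIcc (hrange y hy)) (Set.Icc_subset_uIcc (hrange x hx))

section Laplacian

variable {V : Type*} [Fintype V] [DecidableEq V] {w : V → V → ℝ}

theorem weightedLaplacian_mulVec_apply (hdiag : ∀ v, w v v = 0) (f : V → ℝ) (u : V) :
    (weightedLaplacian w *ᵥ f) u = ∑ x, w u x * (f u - f x) := by
  have hterm : ∀ x, weightedLaplacian w u x * f x =
      (if u = x then (∑ y, w u y) * f u else 0) - w u x * f x := by
    intro x
    by_cases hux : u = x
    · subst hux
      simp [weightedLaplacian, hdiag]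
    · simp [weightedLaplacian, hux]
  simp [mulVec, dotProduct, hterm, mul_sub, Finset.sum_mul]

theorem weightedLaplacian_isSymm (hsym : ∀ u v, w u v = w v u) :
    (weightedLaplacian w).IsSymm := by
  ext u v
  by_cases h : u = v
  · subst h
    rfl
  · simp [weightedLaplacian, h, Ne.symm h, hsym u v]

theorem weightedLaplacian_mulVec_sub_const (hdiag : ∀ v, w v v = 0) (f : V → ℝ) (c : ℝ) :
    (weightedLaplacian w *ᵥ fun v => f v - c) = weightedLaplacian w *ᵥ f := by
  ext u
  simp [weightedLaplacian_mulVec_apply hdiag]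

theorem isSubharmonicOn_iff_weightedLaplacian_mulVec_nonpos (hdiag : ∀ v, w v v = 0)
    {f : V → ℝ} {B : Finset V} :
    IsSubharmonicOn w f B ↔ ∀ b ∈ B, (weightedLaplacian w *ᵥ f) b ≤ 0 := by
  simp only [IsSubharmonicOn, weightedLaplacian_mulVec_apply hdiag]

theorem exists_outerBoundary_bounds_of_harmonic
    (hsym : ∀ u v, w u v = w v u) (hdiag : ∀ v, w v v = 0) (hnonneg : ∀ u v, 0 ≤ w u v)
    (hconn : (SimpleGraph.fromRel fun u v => 0 < w u v).Connected)
    {B : Finset V} {a : V} (ha : a ∉ B) {f : V → ℝ}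
    (hf : ∀ b ∈ B, (weightedLaplacian w *ᵥ f) b = 0) {p : V} (hp : p ∈ B) :
    (∃ n ∈ outerBoundary w B, f n ≤ f p) ∧ ∃ n ∈ outerBoundary w B, f p ≤ f n := by
  have hexit : ∀ b ∈ B, ∃ a ∉ B, Relation.ReflTransGen (fun u v => 0 < w u v) b a := fun b _ =>
    ⟨a, ha, reflTransGen_of_connected_fromRel (fun u v h => hsym u v ▸ h) hconn b a⟩
  have hsub : IsSubharmonicOn w f B :=
    (isSubharmonicOn_iff_weightedLaplacian_mulVec_nonpos hdiag).2 fun b hb => (hf b hb).le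
  have hsub_neg : IsSubharmonicOn w (-f) B :=
    (isSubharmonicOn_iff_weightedLaplacian_mulVec_nonpos hdiag).2 fun b hb => by
      simp [mulVec_neg, hf b hb]
  have hlower := hsub_neg.exists_le_outerBoundary (fun b _ => hnonneg b) hexit hp
  simp only [Pi.neg_apply, neg_le_neg_iff] at hlower
  exact ⟨hlower, hsub.exists_le_outerBoundary (fun b _ => hnonneg b) hexit hp⟩

end Laplacian

section ShiftFactor

variable {V : Type*}

theorem potential_sub_eq_potential_sub_of_isSymm {R : Type*} [CommRing R] [Fintype V]
    [DecidableEq V] {L : Matrix V V R} (hL : L.IsSymm) {x y : V → R} {a b c d : V}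
    (hx : L *ᵥ x = Pi.single a 1 - Pi.single b 1) (hy : L *ᵥ y = Pi.single c 1 - Pi.single d 1) :
    x c - x d = y a - y b := by
  have h : x ⬝ᵥ (L *ᵥ y) = y ⬝ᵥ (L *ᵥ x) := by
    rw [dotProduct_mulVec, ← mulVec_transpose, hL.eq, dotProduct_comm]
  simpa [hx, hy, dotProduct_sub] using h

/-- The injection shift factor `Ψ_{ℓ,v}` of a line `ℓ` of susceptance `b` whose positive direction
runs from `i2` to `i1`. The angles `Θ v` belong to a unit injection at `v` withdrawn at the
reference bus. -/
def shiftFactor (Θ : V → V → ℝ) (b : ℝ) (i1 i2 v : V) : ℝ :=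
  b * (Θ v i2 - Θ v i1)

theorem weightedLaplacian_mulVec_shiftFactor [Fintype V] [DecidableEq V] {w : V → V → ℝ}
    (hsym : ∀ u v, w u v = w v u) (hdiag : ∀ v, w v v = 0) {r : V} {Θ : V → V → ℝ}
    (hΘ : ∀ v, weightedLaplacian w *ᵥ Θ v = Pi.single v 1 - Pi.single r 1) (b : ℝ) (i1 i2 : V) :
    weightedLaplacian w *ᵥ shiftFactor Θ b i1 i2 = b • (Pi.single i2 1 - Pi.single i1 1) := by
  have hline : weightedLaplacian w *ᵥ (Θ i2 - Θ i1) = Pi.single i2 1 - Pi.single i1 1 := by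
    rw [mulVec_sub, hΘ, hΘ, sub_sub_sub_cancel_right]
  have hrecip : shiftFactor Θ b i1 i2 = b • fun v => (Θ i2 - Θ i1) v - (Θ i2 - Θ i1) r := by
    ext v
    simp only [shiftFactor, Pi.smul_apply, smul_eq_mul,
      potential_sub_eq_potential_sub_of_isSymm (weightedLaplacian_isSymm hsym) (hΘ v) hline]
  rw [hrecip, mulVec_smul, weightedLaplacian_mulVec_sub_const hdiag, hline]

end ShiftFactor

section VertexCut

variable {V : Type*} [Fintype V] [DecidableEq V] {C B : Finset V}

theorem filter_adj_eq_outerBoundary {w : V → V → ℝ} (hsym : ∀ u v, w u v = w v u)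
    (hCB : Disjoint C B) (hsep : ∀ a ∈ (C ∪ B)ᶜ, ∀ b ∈ B, w a b = 0) :
    (C.filter fun n => ∃ b ∈ B, 0 < w n b) = outerBoundary w B := by
  ext n
  simp only [Finset.mem_filter, mem_outerBoundary, hsym n]
  refine and_congr_left fun ⟨b, hb, hpos⟩ =>
    ⟨fun hnC => Finset.disjoint_left.1 hCB hnC, fun hnB => ?_⟩
  by_contra hnC
  exact hpos.ne' (hsym b n ▸ hsep n (by simp [hnC, hnB]) b hb)

theorem notMem_of_mem_compl_union (hCB : Disjoint C B) {x : V} (hx : x ∈ (C ∪ B)ᶜ ∪ C) :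
    x ∉ B := by
  rcases Finset.mem_union.1 hx with hxA | hxC
  · exact fun hxB => Finset.mem_compl.1 hxA (Finset.mem_union_right C hxB)
  · exact Finset.disjoint_left.1 hCB hxC

end VertexCut

theorem optimal_pair_in_vertex_cut_set_general {V : Type*} [Fintype V] [DecidableEq V]
    {w : V → V → ℝ}
    (hsym : ∀ u v, w u v = w v u)
    (hdiag : ∀ v, w v v = 0)
    (hnonneg : ∀ u v, 0 ≤ w u v)
    (hconn : (SimpleGraph.fromRel fun u v => 0 < w u v).Connected)
    {r : V} {Θ : V → V → ℝ}
    (hΘ : ∀ v, weightedLaplacian w *ᵥ Θ v = Pi.single v 1 - Pi.single r 1)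
    {B : Finset V} (hB : B.Nonempty) {i1 i2 : V} (hi1 : i1 ∉ B) (hi2 : i2 ∉ B)
    {b : ℝ} {Ψ : V → ℝ} (hΨ : ∀ v, Ψ v = shiftFactor Θ b i1 i2 v) :
    (∀ p ∈ B, (∃ n1 ∈ outerBoundary w B, Ψ n1 ≤ Ψ p) ∧
      (∃ n2 ∈ outerBoundary w B, Ψ p ≤ Ψ n2)) ∧
    (∃ u ∈ outerBoundary w B, ∃ v ∈ outerBoundary w B,
      ∀ x ∈ B ∪ outerBoundary w B, ∀ y ∈ B ∪ outerBoundary w B, |Ψ x - Ψ y| ≤ |Ψ u - Ψ v|) := by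
  obtain rfl : Ψ = shiftFactor Θ b i1 i2 := funext hΨ
  have hharmonic : ∀ q ∈ B, (weightedLaplacian w *ᵥ shiftFactor Θ b i1 i2) q = 0 := by
    intro q hq
    simp [weightedLaplacian_mulVec_shiftFactor hsym hdiag hΘ, ne_of_mem_of_not_mem hq hi1,
      ne_of_mem_of_not_mem hq hi2]
  have hbounds := fun p (hp : p ∈ B) =>
    exists_outerBoundary_bounds_of_harmonic hsym hdiag hnonneg hconn hi1 hharmonic hp
  obtain ⟨p, hp⟩ := hB
  obtain ⟨n, hn, -⟩ := (hbounds p hp).1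
  exact ⟨hbounds, exists_abs_sub_le_abs_sub_of_between ⟨n, hn⟩ hbounds⟩

/-- Proposition 1.  Decompose the connected grid by a vertex cut set `C`: `B` is a
union of some (but not all) of the connected components of `G − C`, `A = V ∖ (B ∪ C)`
is nonempty, and no edge joins `A` and `B`.  Let `N` be the set of cut vertices
adjacent to `B`, and let line `i` be an edge with both endpoints in `A ∪ C`.  Then
for every bus `p ∈ B`, the shift factor `Ψ_{i,p}` lies between the minimum and the
maximum of the shift factors `Ψ_{i,n}` over `n ∈ N`; consequently a pair of buses of
`B ∪ N` maximizing `|Ψ_{i,·} − Ψ_{i,·}|` can be chosen inside `N`. -/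
theorem optimal_pair_in_vertex_cut_set {V : Type*} [Fintype V] [DecidableEq V]
    (w : V → V → ℝ)
    (hsym : ∀ u v, w u v = w v u)
    (hdiag : ∀ v, w v v = 0)
    (hnonneg : ∀ u v, 0 ≤ w u v)
    (hconn : (SimpleGraph.fromRel fun u v => 0 < w u v).Connected)
    -- the reference bus and the nodal angles defining the shift factors
    (r : V) (Θ : V → V → ℝ)
    (hΘr : ∀ v, Θ v r = 0)
    (hΘ : ∀ v, weightedLaplacian w *ᵥ Θ v = Pi.single v 1 - Pi.single r 1)
    -- the vertex cut set `C` and the decomposition `V = A ∪ C ∪ B`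
    (C B : Finset V) (hCB : Disjoint C B) (hB : B.Nonempty)
    (A : Finset V) (hA : A = (C ∪ B)ᶜ) (hAne : A.Nonempty)
    (hsep : ∀ a ∈ A, ∀ b ∈ B, w a b = 0)
    -- the cut vertices adjacent to `B`
    (N : Finset V) (hN : N = C.filter fun n => ∃ b ∈ B, 0 < w n b)
    -- line `i`, an edge with both endpoints in `A ∪ C`
    (i1 i2 : V) (hi : 0 < w i1 i2) (hi1 : i1 ∈ A ∪ C) (hi2 : i2 ∈ A ∪ C)
    -- the shift factor of line `i` with respect to injection at bus `v`
    (Ψ : V → ℝ) (hΨ : ∀ v, Ψ v = w i1 i2 * (Θ v i2 - Θ v i1)) :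
    (∀ p ∈ B, (∃ n1 ∈ N, Ψ n1 ≤ Ψ p) ∧ (∃ n2 ∈ N, Ψ p ≤ Ψ n2)) ∧
    (∃ u ∈ N, ∃ v ∈ N, ∀ x ∈ B ∪ N, ∀ y ∈ B ∪ N, |Ψ x - Ψ y| ≤ |Ψ u - Ψ v|) := by
  rw [hN, filter_adj_eq_outerBoundary hsym hCB (hA ▸ hsep)]
  exact optimal_pair_in_vertex_cut_set_general hsym hdiag hnonneg hconn hΘ hB
    (notMem_of_mem_compl_union hCB (hA ▸ hi1)) (notMem_of_mem_compl_union hCB (hA ▸ hi2)) hΨ
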